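/- Energy dissipation law for the Cahn–Hilliard–Navier–Stokes system (continuous level): let T > 0 and M, λ, ν, ε > 0. Let φ, μ, p : ℝ^d × [0,T] → ℝ and u : ℝ^d × [0,T] → ℝ^d be jointly C² (all partial derivatives in x up to order 2 and in t up to order 1 exist and are continuous, as well as the mixed derivatives ∂ₜ∂ₓᵢφ). Assume that for every t ∈ [0,T], pointwise on Ω: ∂ₜφ + ∇·(uφ) = MΔμ; μ = −λΔφ + λG′(φ); ∂ₜu + u·∇u − νΔu + ∇p = −φ∇μ; ∇·u = 0; with boundary conditions ∂ₙφ(·,t) = ∂ₙμ(·,t) = 0 and u(·,t) = 0 on ∂Ω. Define E(t) = ∫_Ω (½|u(x,t)|² + (λ/2)|∇φ(x,t)|² + λG(φ(x,t))) dx. Then for every t ∈ (0,T), E is differentiable at t with E′(t) = −M∫_Ω |∇μ(x,t)|² dx − ν∫_Ω ∑_{i,j}(∂ⱼuᵢ(x,t))² dx ≤ 0; in particular E is nonincreasing on [0,T]. -/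

import Mathlib

open MeasureTheory Finset

noncomputable section

/-- Partial derivative of `f` in coordinate direction `i`. -/
def pd {d : ℕ} (i : Fin d) (f : (Fin d → ℝ) → ℝ) (x : Fin d → ℝ) : ℝ :=
  fderiv ℝ f x (Pi.single i 1)

/-- Divergence of a vector field. -/
def vdiv {d : ℕ} (u : (Fin d → ℝ) → Fin d → ℝ) (x : Fin d → ℝ) : ℝ :=
  ∑ i, pd i (fun y => u y i) x

/-- Laplacian. -/
def lap {d : ℕ} (f : (Fin d → ℝ) → ℝ) (x : Fin d → ℝ) : ℝ :=
  ∑ i, pd i (pd i f) x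

/-- Convection term `(u·∇)v`, component `i`. -/
def convect {d : ℕ} (u v : (Fin d → ℝ) → Fin d → ℝ) (x : Fin d → ℝ) (i : Fin d) : ℝ :=
  ∑ j, u x j * pd j (fun y => v y i) x

/-- Homogeneous Neumann boundary condition on the box `[a,b]`. -/
def neumannBC {d : ℕ} (a b : Fin d → ℝ) (f : (Fin d → ℝ) → ℝ) : Prop :=
  ∀ i : Fin d, ∀ x ∈ Set.Icc a b, (x i = a i ∨ x i = b i) → pd i f x = 0

/-- The Ginzburg–Landau potential `G(s) = (1 - s²)²/(4ε²)`. -/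
def Gfun (ε s : ℝ) : ℝ := (1 - s^2)^2 / (4 * ε^2)

/-- `G′(s) = (s³ - s)/ε²`. -/
def Gprime (ε s : ℝ) : ℝ := (s^3 - s) / ε^2

/-!
Testing the momentum equation with `u`, the Cahn–Hilliard equation with `μ` and the formula for `μ`
with `∂ₜφ` turns `E′` into boundary-free integrals by Gauss–Green: the no-slip and Neumann
conditions kill all normal fluxes. Convection and pressure do no work because `u` is solenoidal and
`u · (u·∇)u = u · ∇(|u|²/2)`, and the capillary work `-∫ φ u·∇μ` in the kinetic balance cancels the
advective term `∫ φ u·∇μ` in the free energy balance. Only the two dissipation terms survive.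
-/

section PartialDerivatives

variable {d : ℕ}

theorem contDiff_pd {m n : WithTop ℕ∞} {f : (Fin d → ℝ) → ℝ} (hf : ContDiff ℝ n f)
    (hmn : m + 1 ≤ n) (i : Fin d) : ContDiff ℝ m (pd i f) :=
  (hf.fderiv_right hmn).clm_apply contDiff_const

theorem continuous_pd {f : (Fin d → ℝ) → ℝ} (hf : ContDiff ℝ 1 f) (i : Fin d) :
    Continuous (pd i f) :=
  (contDiff_pd hf (m := 0) (by norm_num) i).continuous

theorem continuous_vdiv {V : (Fin d → ℝ) → Fin d → ℝ} (hV : ContDiff ℝ 1 V) :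
    Continuous (vdiv V) :=
  continuous_finsetSum _ fun i _ => continuous_pd (contDiff_pi.1 hV i) i

theorem contDiff_grad {f : (Fin d → ℝ) → ℝ} (hf : ContDiff ℝ 2 f) :
    ContDiff ℝ 1 (fun x i => pd i f x) :=
  contDiff_pi.2 fun i => contDiff_pd hf (by norm_num) i

theorem continuous_lap {f : (Fin d → ℝ) → ℝ} (hf : ContDiff ℝ 2 f) : Continuous (lap f) :=
  continuous_vdiv (contDiff_grad hf)

theorem pd_fun_mul {f g : (Fin d → ℝ) → ℝ} {x : Fin d → ℝ} (hf : DifferentiableAt ℝ f x)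
    (hg : DifferentiableAt ℝ g x) (i : Fin d) :
    pd i (fun y => f y * g y) x = f x * pd i g x + pd i f x * g x := by
  simp [pd, fderiv_fun_mul hf hg, mul_comm]

theorem vdiv_fun_mul {f : (Fin d → ℝ) → ℝ} {V : (Fin d → ℝ) → Fin d → ℝ} {x : Fin d → ℝ}
    (hf : DifferentiableAt ℝ f x) (hV : DifferentiableAt ℝ V x) :
    vdiv (fun y i => f y * V y i) x = f x * vdiv V x + ∑ i, pd i f x * V x i := by
  simp only [vdiv, pd_fun_mul hf (differentiableAt_pi.1 hV _), sum_add_distrib, mul_sum]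

theorem pd_half_sum_sq {v : (Fin d → ℝ) → Fin d → ℝ} {x : Fin d → ℝ}
    (hv : DifferentiableAt ℝ v x) (j : Fin d) :
    pd j (fun y => 1 / 2 * ∑ i, v y i ^ 2) x = ∑ i, v x i * pd j (fun y => v y i) x := by
  have hsq := (HasFDerivAt.fun_sum fun i (_ : i ∈ univ) =>
    ((differentiableAt_pi.1 hv i).hasFDerivAt.pow 2)).const_mul (1 / 2 : ℝ)
  rw [pd, hsq.fderiv]
  simp [pd, mul_sum, mul_assoc]

theorem sum_mul_convect {v : (Fin d → ℝ) → Fin d → ℝ} {x : Fin d → ℝ}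
    (hv : DifferentiableAt ℝ v x) (w : (Fin d → ℝ) → Fin d → ℝ) :
    ∑ i, v x i * convect w v x i = ∑ j, w x j * pd j (fun y => 1 / 2 * ∑ i, v y i ^ 2) x := by
  simp only [pd_half_sum_sq hv]
  simp only [convect, mul_sum]
  rw [sum_comm]
  exact sum_congr rfl fun j _ => sum_congr rfl fun i _ => mul_left_comm _ _ _

end PartialDerivatives

section TimeSlices

section General

variable {X F : Type*} [NormedAddCommGroup X] [NormedSpace ℝ X] [NormedAddCommGroup F]
  [NormedSpace ℝ F] {m n : WithTop ℕ∞} {f : X → ℝ → F}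

theorem contDiff_slice (hf : ContDiff ℝ n (fun q : X × ℝ => f q.1 q.2)) (t : ℝ) :
    ContDiff ℝ n (fun x => f x t) :=
  hf.comp (contDiff_id.prodMk contDiff_const)

theorem hasDerivAt_slice (hf : Differentiable ℝ (fun q : X × ℝ => f q.1 q.2)) (x : X) (t : ℝ) :
    HasDerivAt (f x) (fderiv ℝ (fun q : X × ℝ => f q.1 q.2) (x, t) (0, 1)) t :=
  (hf (x, t)).hasFDerivAt.comp_hasDerivAt t ((hasDerivAt_const t x).prodMk (hasDerivAt_id t))

theorem contDiff_deriv_slice (hf : ContDiff ℝ n (fun q : X × ℝ => f q.1 q.2)) (hmn : m + 1 ≤ n) :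
    ContDiff ℝ m (fun q : X × ℝ => deriv (f q.1) q.2) := by
  have hdiff := hf.differentiable (one_pos.trans_le (le_add_self.trans hmn)).ne'
  simp only [(hasDerivAt_slice hdiff _ _).deriv]
  exact (hf.fderiv_right hmn).clm_apply contDiff_const

theorem fderiv_fderiv_apply_comm {f : X → F} (hf : ContDiff ℝ 2 f) (v w x : X) :
    fderiv ℝ (fun y => fderiv ℝ f y v) x w = fderiv ℝ (fun y => fderiv ℝ f y w) x v := by
  have hdiff : DifferentiableAt ℝ (fderiv ℝ f) x :=
    (hf.fderiv_right (m := 1) (by norm_num)).differentiable one_ne_zero x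
  have hsymm : IsSymmSndFDerivAt ℝ f x := hf.contDiffAt.isSymmSndFDerivAt (by simp)
  rw [fderiv_clm_apply hdiff (differentiableAt_const v),
    fderiv_clm_apply hdiff (differentiableAt_const w)]
  simpa using hsymm.eq w v

end General

variable {d : ℕ} {f : (Fin d → ℝ) → ℝ → ℝ}

theorem pd_slice (hf : Differentiable ℝ (fun q : (Fin d → ℝ) × ℝ => f q.1 q.2)) (i : Fin d)
    (x : Fin d → ℝ) (t : ℝ) :
    pd i (fun y => f y t) x
      = fderiv ℝ (fun q : (Fin d → ℝ) × ℝ => f q.1 q.2) (x, t) (Pi.single i 1, 0) := by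
  have hslice := HasFDerivAt.comp (f := fun y => (y, t)) x (hf (x, t)).hasFDerivAt
    (hasFDerivAt_prodMk_left x t)
  change fderiv ℝ ((fun q : (Fin d → ℝ) × ℝ => f q.1 q.2) ∘ fun y => (y, t)) x _ = _
  rw [hslice.fderiv]
  simp

theorem contDiff_pd_slice {m n : WithTop ℕ∞}
    (hf : ContDiff ℝ n (fun q : (Fin d → ℝ) × ℝ => f q.1 q.2)) (hmn : m + 1 ≤ n) (i : Fin d) :
    ContDiff ℝ m (fun q : (Fin d → ℝ) × ℝ => pd i (fun y => f y q.2) q.1) := by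
  have hdiff := hf.differentiable (one_pos.trans_le (le_add_self.trans hmn)).ne'
  simp only [pd_slice hdiff]
  exact (hf.fderiv_right hmn).clm_apply contDiff_const

theorem hasDerivAt_pd_slice (hf : ContDiff ℝ 2 (fun q : (Fin d → ℝ) × ℝ => f q.1 q.2)) (i : Fin d)
    (x : Fin d → ℝ) (t : ℝ) :
    HasDerivAt (fun s => pd i (fun y => f y s) x) (pd i (fun y => deriv (f y) t) x) t := by
  have hdiff := hf.differentiable two_ne_zero
  have hpd := (contDiff_pd_slice hf (m := 1) (by norm_num) i).differentiable one_ne_zero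
  have hdt := (contDiff_deriv_slice hf (m := 1) (by norm_num)).differentiable one_ne_zero
  refine (hasDerivAt_slice (f := fun y s => pd i (fun z => f z s) y) hpd x t).congr_deriv ?_
  rw [pd_slice (f := fun y => deriv (f y)) hdt]
  simp only [(hasDerivAt_slice hdiff _ _).deriv, pd_slice hdiff]
  exact fderiv_fderiv_apply_comm hf _ _ _

end TimeSlices

section Integration

theorem mem_frontier_Icc_of_apply_eq {ι α : Type*} [Finite ι] [LinearOrder α] [TopologicalSpace α]
    [OrderTopology α] [DenselyOrdered α] [NoMinOrder α] [NoMaxOrder α] {a b x : ι → α}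
    (hx : x ∈ Set.Icc a b) {i : ι} (hi : x i = a i ∨ x i = b i) : x ∈ frontier (Set.Icc a b) := by
  refine ⟨subset_closure hx, fun hint => ?_⟩
  rw [← Set.pi_univ_Icc, interior_pi_set Set.finite_univ] at hint
  have hxi : x i ∈ Set.Ioo (a i) (b i) := interior_Icc (a := a i) ▸ hint i (Set.mem_univ i)
  exact hi.elim hxi.1.ne' hxi.2.ne

theorem hasDerivAt_setIntegral_of_continuous {X E : Type*} [TopologicalSpace X]
    [MeasurableSpace X] [OpensMeasurableSpace X] [NormedAddCommGroup E] [NormedSpace ℝ E]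
    {m : Measure X} [IsFiniteMeasureOnCompacts m] {K : Set X} (hK : IsCompact K)
    (hKm : MeasurableSet K) {F F' : X → ℝ → E} (hF : ∀ s, Continuous (fun x => F x s))
    (hF' : Continuous (fun q : X × ℝ => F' q.1 q.2))
    (hderiv : ∀ x s, HasDerivAt (F x) (F' x s) s) (t : ℝ) :
    HasDerivAt (fun s => ∫ x in K, F x s ∂m) (∫ x in K, F' x t ∂m) t := by
  have hint : ∀ {g : X → E}, Continuous g → IntegrableOn g K m := fun hg =>
    hg.continuousOn.integrableOn_compact' hK hKm
  obtain ⟨C, hC⟩ := (hK.prod (isCompact_closedBall t 1)).exists_bound_of_continuousOn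
    hF'.continuousOn
  refine (hasDerivAt_integral_of_dominated_loc_of_deriv_le (F := fun s x => F x s)
    (F' := fun s x => F' x s) (bound := fun _ => C) (Metric.closedBall_mem_nhds t one_pos)
    (.of_forall fun s => (hint (hF s)).aestronglyMeasurable) (hint (hF t))
    (hint (hF'.comp (.prodMk_left t))).aestronglyMeasurable ?_
    (integrableOn_const hK.measure_ne_top) (.of_forall fun x s _ => hderiv x s)).2
  exact ae_restrict_of_forall_mem hKm fun x hx s hs => hC (x, s) ⟨hx, hs⟩

variable {d : ℕ} {a b : Fin d → ℝ}

/-- The vector field `V` has vanishing normal component on the faces of the box `[a,b]`;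
`neumannBC a b f` unfolds to this condition on the gradient of `f`. -/
def noFluxBC (a b : Fin d → ℝ) (V : (Fin d → ℝ) → Fin d → ℝ) : Prop :=
  ∀ i, ∀ x ∈ Set.Icc a b, (x i = a i ∨ x i = b i) → V x i = 0

theorem noFluxBC_of_eq_zero_on_frontier {V : (Fin d → ℝ) → Fin d → ℝ}
    (hV : ∀ x ∈ frontier (Set.Icc a b), V x = 0) : noFluxBC a b V := fun i x hx hface =>
  congr_fun (hV x (mem_frontier_Icc_of_apply_eq hx hface)) i

theorem noFluxBC_mul_left {V : (Fin d → ℝ) → Fin d → ℝ} (hV : noFluxBC a b V)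
    (f : (Fin d → ℝ) → ℝ) : noFluxBC a b (fun x i => f x * V x i) := fun i x hx hface =>
  mul_eq_zero_of_right _ (hV i x hx hface)

theorem integral_vdiv_eq_zero {V : (Fin d → ℝ) → Fin d → ℝ} (hV : ContDiff ℝ 1 V)
    (hbc : noFluxBC a b V) : ∫ x in Set.Icc a b, vdiv V x = 0 := by
  rcases d with _ | n
  · simp [vdiv]
  by_cases hab : a ≤ b
  swap
  · simp [Set.Icc_eq_empty hab]
  have hVi := contDiff_pi.1 hV
  refine (integral_divergence_of_hasFDerivAt_off_countable' a b hab (fun i x => V x i)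
    (fun i => fderiv ℝ (fun x => V x i)) ∅ Set.countable_empty
    (fun i => (hVi i).continuous.continuousOn)
    (fun x _ i => ((hVi i).differentiable one_ne_zero x).hasFDerivAt)
    (continuous_vdiv hV).integrableOn_Icc).trans (sum_eq_zero fun i _ => ?_)
  have hface : ∀ c ∈ Set.Icc (a i) (b i), (c = a i ∨ c = b i) →
      ∫ y in Set.Icc (a ∘ i.succAbove) (b ∘ i.succAbove), V (i.insertNth c y) i = 0 :=
    fun c hc hends => setIntegral_eq_zero_of_forall_eq_zero fun y hy =>
      hbc i _ (Fin.insertNth_mem_Icc.2 ⟨hc, hy⟩) (by simpa using hends)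
  rw [hface _ (Set.right_mem_Icc.2 (hab i)) (.inr rfl),
    hface _ (Set.left_mem_Icc.2 (hab i)) (.inl rfl), sub_zero]

theorem integral_mul_vdiv {f : (Fin d → ℝ) → ℝ} {V : (Fin d → ℝ) → Fin d → ℝ}
    (hf : ContDiff ℝ 1 f) (hV : ContDiff ℝ 1 V) (hbc : noFluxBC a b fun x i => f x * V x i) :
    ∫ x in Set.Icc a b, f x * vdiv V x = -∫ x in Set.Icc a b, ∑ i, pd i f x * V x i := by
  have hVi := contDiff_pi.1 hV
  have hprod : ContDiff ℝ 1 (fun x i => f x * V x i) := contDiff_pi.2 fun i => hf.mul (hVi i)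
  have hgrad : Continuous fun x => ∑ i, pd i f x * V x i :=
    continuous_finsetSum _ fun i _ => (continuous_pd hf i).mul (hVi i).continuous
  have hzero := integral_vdiv_eq_zero hprod hbc
  simp only [vdiv_fun_mul (hf.differentiable one_ne_zero _) (hV.differentiable one_ne_zero _)]
    at hzero
  rw [integral_add (hf.continuous.fun_mul (continuous_vdiv hV)).integrableOn_Icc
    hgrad.integrableOn_Icc] at hzero
  exact eq_neg_of_add_eq_zero_left hzero

theorem integral_mul_lap {f g : (Fin d → ℝ) → ℝ} (hf : ContDiff ℝ 1 f) (hg : ContDiff ℝ 2 g)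
    (hbc : noFluxBC a b fun x i => f x * pd i g x) :
    ∫ x in Set.Icc a b, f x * lap g x = -∫ x in Set.Icc a b, ∑ i, pd i f x * pd i g x :=
  integral_mul_vdiv hf (contDiff_grad hg) hbc

theorem integral_sum_mul_pd_eq_zero {f : (Fin d → ℝ) → ℝ} {v : (Fin d → ℝ) → Fin d → ℝ}
    (hf : ContDiff ℝ 1 f) (hv : ContDiff ℝ 1 v) (hdiv : ∀ x ∈ Set.Icc a b, vdiv v x = 0)
    (hbc : noFluxBC a b v) : ∫ x in Set.Icc a b, ∑ i, v x i * pd i f x = 0 := by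
  have hdiv_int : ∫ x in Set.Icc a b, f x * vdiv v x = 0 :=
    setIntegral_eq_zero_of_forall_eq_zero fun x hx => by rw [hdiv x hx, mul_zero]
  rw [integral_mul_vdiv hf hv (noFluxBC_mul_left hbc f), neg_eq_zero] at hdiv_int
  simpa only [mul_comm] using hdiv_int

theorem integral_sum_mul_convect_eq_zero {v w : (Fin d → ℝ) → Fin d → ℝ} (hv : ContDiff ℝ 1 v)
    (hw : ContDiff ℝ 1 w) (hdiv : ∀ x ∈ Set.Icc a b, vdiv w x = 0) (hbc : noFluxBC a b w) :
    ∫ x in Set.Icc a b, ∑ i, v x i * convect w v x i = 0 := by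
  have hsq : ContDiff ℝ 1 fun y => 1 / 2 * ∑ i, v y i ^ 2 :=
    contDiff_const.mul (ContDiff.sum fun i _ => (contDiff_pi.1 hv i).pow 2)
  simp only [sum_mul_convect (hv.differentiable one_ne_zero _)]
  exact integral_sum_mul_pd_eq_zero hsq hw hdiv hbc

theorem integral_sum_mul_lap {v : (Fin d → ℝ) → Fin d → ℝ} (hv : ContDiff ℝ 2 v)
    (hbc : ∀ x ∈ frontier (Set.Icc a b), v x = 0) :
    ∫ x in Set.Icc a b, ∑ i, v x i * lap (fun y => v y i) x
      = -∫ x in Set.Icc a b, ∑ i, ∑ j, pd j (fun y => v y i) x ^ 2 := by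
  have hvi := contDiff_pi.1 hv
  have hvi₁ := contDiff_pi.1 (hv.of_le one_le_two)
  have hgrad : ∀ i, Continuous fun x => ∑ j, pd j (fun y => v y i) x ^ 2 := fun i =>
    continuous_finsetSum _ fun j _ => (continuous_pd (hvi₁ i) j).pow 2
  rw [integral_finsetSum _ fun i _ =>
      ((hvi i).continuous.fun_mul (continuous_lap (hvi i))).integrableOn_Icc,
    integral_finsetSum _ fun i _ => (hgrad i).integrableOn_Icc, ← sum_neg_distrib]
  refine sum_congr rfl fun i _ => ?_
  simp only [sq]
  exact integral_mul_lap (hvi₁ i) (hvi i) <| noFluxBC_of_eq_zero_on_frontier fun x hx => by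
    ext j
    simp [hbc x hx]

end Integration

section EnergyBalances

variable {d : ℕ} {a b : Fin d → ℝ}

theorem integral_navierStokes_balance {ν : ℝ} {v w F : (Fin d → ℝ) → Fin d → ℝ}
    {q : (Fin d → ℝ) → ℝ} (hv : ContDiff ℝ 2 v) (hq : ContDiff ℝ 1 q) (hF : Continuous F)
    (hmomentum : ∀ x ∈ Set.Icc a b, ∀ i,
      w x i + convect v v x i - ν * lap (fun y => v y i) x + pd i q x = F x i)
    (hdiv : ∀ x ∈ Set.Icc a b, vdiv v x = 0) (hbc : ∀ x ∈ frontier (Set.Icc a b), v x = 0) :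
    ∫ x in Set.Icc a b, ∑ i, v x i * w x i
      = (∫ x in Set.Icc a b, ∑ i, v x i * F x i)
        - ν * ∫ x in Set.Icc a b, ∑ i, ∑ j, pd j (fun y => v y i) x ^ 2 := by
  have hv₁ : ContDiff ℝ 1 v := hv.of_le one_le_two
  have hvi : ∀ i, Continuous fun x => v x i := fun i => (contDiff_pi.1 hv i).continuous
  have hpd : ∀ i j, Continuous (pd j fun y => v y i) := fun i =>
    continuous_pd (contDiff_pi.1 hv₁ i)
  have hforce : Continuous fun x => ∑ i, v x i * F x i := by fun_prop
  have hvisc : Continuous fun x => ∑ i, v x i * lap (fun y => v y i) x :=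
    continuous_finsetSum _ fun i _ => (hvi i).mul (continuous_lap (contDiff_pi.1 hv i))
  have hconv : Continuous fun x => ∑ i, v x i * convect v v x i := by
    unfold convect
    fun_prop
  have hpress : Continuous fun x => ∑ i, v x i * pd i q x :=
    continuous_finsetSum _ fun i _ => (hvi i).mul (continuous_pd hq i)
  have hpoint : ∀ x ∈ Set.Icc a b, ∑ i, v x i * w x i
      = (∑ i, v x i * F x i) + ν * (∑ i, v x i * lap (fun y => v y i) x)
        - (∑ i, v x i * convect v v x i) - ∑ i, v x i * pd i q x := fun x hx => by
    simp only [mul_sum, ← sum_add_distrib, ← sum_sub_distrib]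
    exact sum_congr rfl fun i _ => by linear_combination v x i * hmomentum x hx i
  have hflux := noFluxBC_of_eq_zero_on_frontier hbc
  rw [setIntegral_congr_fun measurableSet_Icc hpoint,
    integral_sub ((hforce.fun_add (hvisc.const_mul ν)).fun_sub hconv).integrableOn_Icc
      hpress.integrableOn_Icc,
    integral_sub (hforce.fun_add (hvisc.const_mul ν)).integrableOn_Icc hconv.integrableOn_Icc,
    integral_add hforce.integrableOn_Icc (hvisc.const_mul ν).integrableOn_Icc,
    integral_const_mul, integral_sum_mul_lap hv hbc,
    integral_sum_mul_convect_eq_zero hv₁ hv₁ hdiv hflux,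
    integral_sum_mul_pd_eq_zero hq hv₁ hdiv hflux]
  ring

theorem integral_cahnHilliard_balance {M : ℝ} {f g m : (Fin d → ℝ) → ℝ}
    {v : (Fin d → ℝ) → Fin d → ℝ} (hf : ContDiff ℝ 1 f) (hm : ContDiff ℝ 2 m)
    (hv : ContDiff ℝ 1 v)
    (hcahn : ∀ x ∈ Set.Icc a b, g x + vdiv (fun y i => v y i * f y) x = M * lap m x)
    (hmbc : neumannBC a b m) (hvbc : noFluxBC a b v) :
    ∫ x in Set.Icc a b, m x * g x
      = -M * (∫ x in Set.Icc a b, ∑ i, pd i m x ^ 2)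
        + ∫ x in Set.Icc a b, ∑ i, v x i * (f x * pd i m x) := by
  have hm₁ : ContDiff ℝ 1 m := hm.of_le one_le_two
  have hflux : ContDiff ℝ 1 fun y i => v y i * f y :=
    contDiff_pi.2 fun i => (contDiff_pi.1 hv i).mul hf
  have hfluxbc : noFluxBC a b fun y i => m y * (v y i * f y) :=
    fun i x hx hface => mul_eq_zero_of_right _ (mul_eq_zero_of_left (hvbc i x hx hface) _)
  have hdiff : Continuous fun x => M * (m x * lap m x) :=
    (hm.continuous.mul (continuous_lap hm)).const_mul M
  have hadv : Continuous fun x => m x * vdiv (fun y i => v y i * f y) x :=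
    hm.continuous.mul (continuous_vdiv hflux)
  have hpoint : ∀ x ∈ Set.Icc a b,
      m x * g x = M * (m x * lap m x) - m x * vdiv (fun y i => v y i * f y) x := fun x hx => by
    linear_combination m x * hcahn x hx
  rw [setIntegral_congr_fun measurableSet_Icc hpoint,
    integral_sub hdiff.integrableOn_Icc hadv.integrableOn_Icc, integral_const_mul,
    integral_mul_lap hm₁ hm (noFluxBC_mul_left hmbc m), integral_mul_vdiv hm₁ hflux hfluxbc,
    mul_neg, sub_neg_eq_add, neg_mul]
  simp only [sq, mul_comm, mul_left_comm]

theorem integral_freeEnergy_variation {lam : ℝ} {f g m P : (Fin d → ℝ) → ℝ}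
    (hf : ContDiff ℝ 2 f) (hg : ContDiff ℝ 1 g) (hP : Continuous P)
    (hpotential : ∀ x ∈ Set.Icc a b, m x = -lam * lap f x + lam * P x) (hbc : neumannBC a b f) :
    ∫ x in Set.Icc a b, (lam * (∑ i, pd i f x * pd i g x) + lam * (P x * g x))
      = ∫ x in Set.Icc a b, m x * g x := by
  have hbulk : Continuous fun x => lam * (P x * g x) := (hP.mul hg.continuous).const_mul lam
  have hlap : Continuous fun x => lam * (g x * lap f x) :=
    (hg.continuous.mul (continuous_lap hf)).const_mul lam
  have hgrad : Continuous fun x => lam * ∑ i, pd i g x * pd i f x :=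
    (continuous_finsetSum _ fun i _ =>
      (continuous_pd hg i).mul (continuous_pd (hf.of_le one_le_two) i)).const_mul lam
  have hpoint : ∀ x ∈ Set.Icc a b, m x * g x = lam * (P x * g x) - lam * (g x * lap f x) :=
    fun x hx => by rw [hpotential x hx]; ring
  rw [setIntegral_congr_fun measurableSet_Icc hpoint,
    integral_sub hbulk.integrableOn_Icc hlap.integrableOn_Icc,
    integral_const_mul lam fun x => g x * lap f x, integral_mul_lap hg hf (noFluxBC_mul_left hbc g)]
  simp only [mul_comm (pd _ f _)]
  rw [integral_add hgrad.integrableOn_Icc hbulk.integrableOn_Icc, integral_const_mul]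
  ring

end EnergyBalances

section CahnHilliardNavierStokes

variable {d : ℕ} {a b : Fin d → ℝ} {M lam ν t : ℝ} {G G' : ℝ → ℝ}
  {φ μ p : (Fin d → ℝ) → ℝ → ℝ} {u : (Fin d → ℝ) → ℝ → Fin d → ℝ}

/-- At time `t` the fields `φ`, `μ`, `p`, `u` satisfy the Cahn–Hilliard–Navier–Stokes equations on
the box `[a,b]`, for a bulk potential with derivative `G'`, together with the boundary conditions
and the regularity in space that the equations call for. -/
structure IsCHNSSolutionAt (a b : Fin d → ℝ) (M lam ν : ℝ) (G' : ℝ → ℝ)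
    (φ μ p : (Fin d → ℝ) → ℝ → ℝ) (u : (Fin d → ℝ) → ℝ → Fin d → ℝ) (t : ℝ) : Prop where
  contDiff_potential : ContDiff ℝ 2 fun x => μ x t
  contDiff_pressure : ContDiff ℝ 1 fun x => p x t
  contDiff_velocity : ContDiff ℝ 2 fun x => u x t
  cahn_hilliard : ∀ x ∈ Set.Icc a b,
    deriv (fun s => φ x s) t + vdiv (fun y i => u y t i * φ y t) x = M * lap (fun y => μ y t) x
  chemical_potential : ∀ x ∈ Set.Icc a b,
    μ x t = -lam * lap (fun y => φ y t) x + lam * G' (φ x t)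
  momentum : ∀ x ∈ Set.Icc a b, ∀ i,
    deriv (fun s => u x s i) t + convect (fun y => u y t) (fun y => u y t) x i
      - ν * lap (fun y => u y t i) x + pd i (fun y => p y t) x
      = -(φ x t * pd i (fun y => μ y t) x)
  incompressible : ∀ x ∈ Set.Icc a b, vdiv (fun y => u y t) x = 0
  neumann_phase : neumannBC a b fun y => φ y t
  neumann_potential : neumannBC a b fun y => μ y t
  no_slip : ∀ x ∈ frontier (Set.Icc a b), u x t = 0

/-- The energy density `|u|²/2 + (lam/2)|∇φ|² + lam G(φ)`. -/
def chnsEnergyDensity (lam : ℝ) (G : ℝ → ℝ) (φ : (Fin d → ℝ) → ℝ → ℝ)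
    (u : (Fin d → ℝ) → ℝ → Fin d → ℝ) (x : Fin d → ℝ) (t : ℝ) : ℝ :=
  (1/2) * (∑ i, (u x t i)^2) + (lam/2) * (∑ i, (pd i (fun y => φ y t) x)^2) + lam * G (φ x t)

/-- The total energy of the phase field `φ` and the velocity `u` in the box `[a,b]` at time `t`. -/
def chnsEnergy (a b : Fin d → ℝ) (lam : ℝ) (G : ℝ → ℝ) (φ : (Fin d → ℝ) → ℝ → ℝ)
    (u : (Fin d → ℝ) → ℝ → Fin d → ℝ) (t : ℝ) : ℝ :=
  ∫ x in Set.Icc a b, chnsEnergyDensity lam G φ u x t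

/-- The energy production `-M ‖∇μ‖² - ν ‖∇u‖²` in the box `[a,b]` at time `t`. -/
def chnsEnergyRate (a b : Fin d → ℝ) (M ν : ℝ) (μ : (Fin d → ℝ) → ℝ → ℝ)
    (u : (Fin d → ℝ) → ℝ → Fin d → ℝ) (t : ℝ) : ℝ :=
  -M * (∫ x in Set.Icc a b, ∑ i, (pd i (fun y => μ y t) x)^2)
    - ν * (∫ x in Set.Icc a b, ∑ i, ∑ j, (pd j (fun y => u y t i) x)^2)

theorem chnsEnergyRate_nonpos (hM : 0 ≤ M) (hν : 0 ≤ ν) : chnsEnergyRate a b M ν μ u t ≤ 0 := by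
  have hpotential : 0 ≤ ∫ x in Set.Icc a b, ∑ i, (pd i (fun y => μ y t) x)^2 := by positivity
  have hvelocity : 0 ≤ ∫ x in Set.Icc a b, ∑ i, ∑ j, (pd j (fun y => u y t i) x)^2 := by
    positivity
  unfold chnsEnergyRate
  nlinarith

theorem hasDerivAt_chnsEnergyDensity (hG : ∀ s, HasDerivAt G (G' s) s)
    (hφ : ContDiff ℝ 2 (fun q : (Fin d → ℝ) × ℝ => φ q.1 q.2))
    (hu : Differentiable ℝ (fun q : (Fin d → ℝ) × ℝ => u q.1 q.2)) (x : Fin d → ℝ) (t : ℝ) :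
    HasDerivAt (chnsEnergyDensity lam G φ u x)
      ((∑ i, u x t i * deriv (fun s => u x s i) t)
        + (lam * (∑ i, pd i (fun y => φ y t) x * pd i (fun y => deriv (φ y) t) x)
          + lam * (G' (φ x t) * deriv (φ x) t))) t := by
  have hu_deriv : ∀ i, HasDerivAt (fun s => u x s i) (deriv (fun s => u x s i) t) t := fun i =>
    (hasDerivAt_slice (f := fun y s => u y s i) (differentiable_pi.1 hu i) x
      t).differentiableAt.hasDerivAt
  have hφ_deriv : HasDerivAt (φ x) (deriv (φ x) t) t :=
    (hasDerivAt_slice (hφ.differentiable two_ne_zero) x t).differentiableAt.hasDerivAt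
  have hkinetic := (HasDerivAt.fun_sum fun i (_ : i ∈ univ) =>
    (hu_deriv i).fun_pow 2).const_mul (1/2 : ℝ)
  have hgradient := (HasDerivAt.fun_sum fun i (_ : i ∈ univ) =>
    (hasDerivAt_pd_slice hφ i x t).fun_pow 2).const_mul (lam/2)
  have hbulk := ((hG (φ x t)).comp t hφ_deriv).const_mul lam
  refine ((hkinetic.add hgradient).add hbulk).congr_deriv ?_
  simp only [Nat.cast_ofNat, Nat.add_one_sub_one, pow_one, mul_assoc, ← mul_sum]
  ring

theorem continuous_chnsEnergyDensity (hG : Continuous G)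
    (hφ : ContDiff ℝ 1 (fun q : (Fin d → ℝ) × ℝ => φ q.1 q.2))
    (hu : Continuous (fun q : (Fin d → ℝ) × ℝ => u q.1 q.2)) :
    Continuous (fun q : (Fin d → ℝ) × ℝ => chnsEnergyDensity lam G φ u q.1 q.2) := by
  have hkinetic : Continuous fun q : (Fin d → ℝ) × ℝ => ∑ i, (u q.1 q.2 i)^2 := by fun_prop
  have hgradient : Continuous fun q : (Fin d → ℝ) × ℝ => ∑ i, (pd i (fun y => φ y q.2) q.1)^2 :=
    continuous_finsetSum _ fun i _ =>
      (contDiff_pd_slice hφ (m := 0) (by norm_num) i).continuous.pow 2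
  exact ((hkinetic.const_mul _).add (hgradient.const_mul _)).add
    ((hG.comp hφ.continuous).const_mul lam)

theorem hasDerivAt_chnsEnergy (hG : ∀ s, HasDerivAt G (G' s) s) (hG' : Continuous G')
    (hφ : ContDiff ℝ 2 (fun q : (Fin d → ℝ) × ℝ => φ q.1 q.2))
    (hu : ContDiff ℝ 1 (fun q : (Fin d → ℝ) × ℝ => u q.1 q.2)) (t : ℝ) :
    HasDerivAt (chnsEnergy a b lam G φ u)
      ((∫ x in Set.Icc a b, ∑ i, u x t i * deriv (fun s => u x s i) t)
        + ∫ x in Set.Icc a b,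
          (lam * (∑ i, pd i (fun y => φ y t) x * pd i (fun y => deriv (φ y) t) x)
            + lam * (G' (φ x t) * deriv (φ x) t))) t := by
  have hG_cont : Continuous G := continuous_iff_continuousAt.2 fun s => (hG s).continuousAt
  have hdφ := contDiff_deriv_slice hφ (m := 1) (by norm_num)
  have hdu := fun i => contDiff_deriv_slice (f := fun y s => u y s i) (contDiff_pi.1 hu i) (m := 0)
    (by norm_num)
  have hpdφ := fun i => contDiff_pd_slice hφ (m := 1) (by norm_num) i
  have hpddφ := fun i => contDiff_pd_slice (f := fun y => deriv (φ y)) hdφ (m := 0)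
    (by norm_num) i
  have hkinetic : Continuous fun q : (Fin d → ℝ) × ℝ =>
      ∑ i, u q.1 q.2 i * deriv (fun s => u q.1 s i) q.2 :=
    continuous_finsetSum _ fun i _ => (contDiff_pi.1 hu i).continuous.mul (hdu i).continuous
  have hfree : Continuous fun q : (Fin d → ℝ) × ℝ =>
      lam * (∑ i, pd i (fun y => φ y q.2) q.1 * pd i (fun y => deriv (φ y) q.2) q.1)
        + lam * (G' (φ q.1 q.2) * deriv (φ q.1) q.2) :=
    ((continuous_finsetSum _ fun i _ =>
      (hpdφ i).continuous.mul (hpddφ i).continuous).const_mul lam).add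
      (((hG'.comp hφ.continuous).mul hdφ.continuous).const_mul lam)
  have hdensity := continuous_chnsEnergyDensity (lam := lam) hG_cont (hφ.of_le one_le_two)
    hu.continuous
  refine (hasDerivAt_setIntegral_of_continuous isCompact_Icc measurableSet_Icc
    (fun s => hdensity.comp (.prodMk_left s)) (hkinetic.add hfree)
    (hasDerivAt_chnsEnergyDensity hG hφ (hu.differentiable one_ne_zero)) t).congr_deriv ?_
  exact integral_add (hkinetic.comp (.prodMk_left t)).integrableOn_Icc
    (hfree.comp (.prodMk_left t)).integrableOn_Icc

theorem IsCHNSSolutionAt.hasDerivAt_energy (h : IsCHNSSolutionAt a b M lam ν G' φ μ p u t)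
    (hG : ∀ s, HasDerivAt G (G' s) s) (hG' : Continuous G')
    (hφ : ContDiff ℝ 2 (fun q : (Fin d → ℝ) × ℝ => φ q.1 q.2))
    (hu : ContDiff ℝ 1 (fun q : (Fin d → ℝ) × ℝ => u q.1 q.2)) :
    HasDerivAt (chnsEnergy a b lam G φ u) (chnsEnergyRate a b M ν μ u t) t := by
  have hφt : ContDiff ℝ 2 fun x => φ x t := contDiff_slice hφ t
  have hdφt : ContDiff ℝ 1 fun x => deriv (φ x) t :=
    contDiff_slice (f := fun y => deriv (φ y)) (contDiff_deriv_slice hφ (by norm_num)) t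
  have hcapillary : Continuous fun x i => -(φ x t * pd i (fun y => μ y t) x) :=
    continuous_pi fun i =>
      (hφt.continuous.mul (continuous_pd (h.contDiff_potential.of_le one_le_two) i)).neg
  have hkinetic := integral_navierStokes_balance h.contDiff_velocity h.contDiff_pressure hcapillary
    h.momentum h.incompressible h.no_slip
  have hfree := integral_freeEnergy_variation hφt hdφt (hG'.comp hφt.continuous)
    h.chemical_potential h.neumann_phase
  have hphase := integral_cahnHilliard_balance (hφt.of_le one_le_two) h.contDiff_potential
    (h.contDiff_velocity.of_le one_le_two) h.cahn_hilliard h.neumann_potential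
    (noFluxBC_of_eq_zero_on_frontier h.no_slip)
  refine (hasDerivAt_chnsEnergy hG hG' hφ hu t).congr_deriv ?_
  refine (congr_arg₂ (· + ·) hkinetic (hfree.trans hphase)).trans ?_
  simp only [mul_neg, sum_neg_distrib, integral_neg, chnsEnergyRate]
  ring

theorem hasDerivAt_Gfun (ε s : ℝ) : HasDerivAt (Gfun ε) (Gprime ε s) s := by
  have hquartic := ((((hasDerivAt_id s).fun_pow 2).const_sub 1).fun_pow 2).div_const (4 * ε ^ 2)
  refine hquartic.congr_deriv ?_
  simp only [id, Gprime]
  ring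

theorem continuous_Gprime (ε : ℝ) : Continuous (Gprime ε) := by
  unfold Gprime
  fun_prop

theorem stmt15_general (hM : 0 ≤ M) (hν : 0 ≤ ν) (hG : ∀ s, HasDerivAt G (G' s) s)
    (hG' : Continuous G') (hφ : ContDiff ℝ 2 (fun q : (Fin d → ℝ) × ℝ => φ q.1 q.2))
    (hu : ContDiff ℝ 1 (fun q : (Fin d → ℝ) × ℝ => u q.1 q.2)) {I : Set ℝ} (hI : Convex ℝ I)
    (h : ∀ t ∈ I, IsCHNSSolutionAt a b M lam ν G' φ μ p u t) :
    (∀ t ∈ I, HasDerivAt (chnsEnergy a b lam G φ u) (chnsEnergyRate a b M ν μ u t) t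
      ∧ chnsEnergyRate a b M ν μ u t ≤ 0)
    ∧ AntitoneOn (chnsEnergy a b lam G φ u) I := by
  have hderiv := fun t ht => (h t ht).hasDerivAt_energy hG hG' hφ hu
  refine ⟨fun t ht => ⟨hderiv t ht, chnsEnergyRate_nonpos hM hν⟩, ?_⟩
  exact antitoneOn_of_deriv_nonpos hI (fun t ht => (hderiv t ht).continuousAt.continuousWithinAt)
    (fun t ht => (hderiv t (interior_subset ht)).differentiableAt.differentiableWithinAt)
    fun t ht => (hderiv t (interior_subset ht)).deriv.trans_le (chnsEnergyRate_nonpos hM hν)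

end CahnHilliardNavierStokes

/-- Energy dissipation law for the Cahn–Hilliard–Navier–Stokes system (continuous
level): `E′(t) = −M‖∇μ‖² − ν‖∇u‖² ≤ 0`, so the energy is nonincreasing. -/
theorem stmt15 (d : ℕ) (hd : 1 ≤ d) (a b : Fin d → ℝ) (hab : ∀ i, a i < b i)
    (T M lam ν ε : ℝ) (hT : 0 < T) (hM : 0 < M) (hlam : 0 < lam) (hν : 0 < ν)
    (hε : 0 < ε)
    (φ μ p : (Fin d → ℝ) → ℝ → ℝ) (u : (Fin d → ℝ) → ℝ → Fin d → ℝ)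
    (hφ : ContDiff ℝ 2 (fun q : (Fin d → ℝ) × ℝ => φ q.1 q.2))
    (hμ : ContDiff ℝ 2 (fun q : (Fin d → ℝ) × ℝ => μ q.1 q.2))
    (hp : ContDiff ℝ 2 (fun q : (Fin d → ℝ) × ℝ => p q.1 q.2))
    (hu : ContDiff ℝ 2 (fun q : (Fin d → ℝ) × ℝ => u q.1 q.2))
    -- the Cahn–Hilliard equation
    (heq1 : ∀ t ∈ Set.Icc (0 : ℝ) T, ∀ x ∈ Set.Icc a b,
      deriv (fun s => φ x s) t + vdiv (fun y i => u y t i * φ y t) x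
        = M * lap (fun y => μ y t) x)
    -- the chemical potential
    (heq2 : ∀ t ∈ Set.Icc (0 : ℝ) T, ∀ x ∈ Set.Icc a b,
      μ x t = -lam * lap (fun y => φ y t) x + lam * Gprime ε (φ x t))
    -- the momentum equation
    (heq3 : ∀ t ∈ Set.Icc (0 : ℝ) T, ∀ x ∈ Set.Icc a b, ∀ i : Fin d,
      deriv (fun s => u x s i) t + convect (fun y => u y t) (fun y => u y t) x i
        - ν * lap (fun y => u y t i) x + pd i (fun y => p y t) x
        = -(φ x t * pd i (fun y => μ y t) x))
    -- incompressibility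
    (heq4 : ∀ t ∈ Set.Icc (0 : ℝ) T, ∀ x ∈ Set.Icc a b, vdiv (fun y => u y t) x = 0)
    -- boundary conditions
    (hφbc : ∀ t ∈ Set.Icc (0 : ℝ) T, neumannBC a b (fun y => φ y t))
    (hμbc : ∀ t ∈ Set.Icc (0 : ℝ) T, neumannBC a b (fun y => μ y t))
    (hubc : ∀ t ∈ Set.Icc (0 : ℝ) T, ∀ x ∈ frontier (Set.Icc a b), u x t = 0)
    -- the total energy
    (E : ℝ → ℝ)
    (hE : E = fun t => ∫ x in Set.Icc a b,
      ((1/2) * (∑ i, (u x t i)^2)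
        + (lam/2) * (∑ i, (pd i (fun y => φ y t) x)^2)
        + lam * Gfun ε (φ x t))) :
    (∀ t ∈ Set.Ioo (0 : ℝ) T,
      HasDerivAt E
        (-M * (∫ x in Set.Icc a b, ∑ i, (pd i (fun y => μ y t) x)^2)
          - ν * (∫ x in Set.Icc a b, ∑ i, ∑ j, (pd j (fun y => u y t i) x)^2)) t
      ∧ -M * (∫ x in Set.Icc a b, ∑ i, (pd i (fun y => μ y t) x)^2)
          - ν * (∫ x in Set.Icc a b, ∑ i, ∑ j, (pd j (fun y => u y t i) x)^2) ≤ 0)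
    ∧ ∀ s ∈ Set.Icc (0 : ℝ) T, ∀ t ∈ Set.Icc (0 : ℝ) T, s ≤ t → E t ≤ E s := by
  have hsol : ∀ t ∈ Set.Icc 0 T, IsCHNSSolutionAt a b M lam ν (Gprime ε) φ μ p u t := fun t ht =>
    ⟨contDiff_slice hμ t, contDiff_slice (hp.of_le one_le_two) t, contDiff_slice hu t,
      heq1 t ht, heq2 t ht, heq3 t ht, heq4 t ht, hφbc t ht, hμbc t ht, hubc t ht⟩
  obtain ⟨hderiv, hanti⟩ := stmt15_general hM.le hν.le (hasDerivAt_Gfun ε) (continuous_Gprime ε)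
    hφ (hu.of_le one_le_two) (convex_Icc 0 T) hsol
  exact hE ▸ ⟨fun t ht => hderiv t (Set.Ioo_subset_Icc_self ht), hanti⟩
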